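/- If the principle (*) holds, then there exist a stationary set S⊆S^{ω₂}_ω, an ordinal γ<ω₁, and a coloring f:[ω₂]²→ω₂ such that otp(t_{ηα})≤γ for every α∈S and every η<α, and yet no closed subset C⊆S of order type ω₁ is f-rainbow. -/

import Mathlib

open Set Cardinal Ordinal

universe u

/-- `A` has order type `θ`: there is an order isomorphism from `Iio θ` onto `A`. -/
def HasOType (A : Set Ordinal.{u}) (θ : Ordinal.{u}) : Prop :=
  Nonempty (Set.Iio θ ≃o A)

/-- The order type of `A` is at most `γ`: `A` order-embeds into `Iio γ`. -/
def OTypeLE (A : Set Ordinal.{u}) (γ : Ordinal.{u}) : Prop :=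
  Nonempty (A ↪o Set.Iio γ)

/-- `A` is `f`-rainbow: `f` is injective on increasing pairs from `A`. -/
def IsRainbow (f : Ordinal → Ordinal → Ordinal) (A : Set Ordinal) : Prop :=
  ∀ α ∈ A, ∀ β ∈ A, ∀ γ ∈ A, ∀ δ ∈ A,
    α < β → γ < δ → f α β = f γ δ → α = γ ∧ β = δ

/-- `f` is a normal coloring on pairs below `κ`: equal colors force equal top points. -/
def IsNormalColoring (f : Ordinal → Ordinal → Ordinal) (κ : Ordinal) : Prop :=
  ∀ α β γ δ : Ordinal, α < β → β < κ → γ < δ → δ < κ → f α β = f γ δ → β = δ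

/-- `f` is 2-bounded: every fiber of `f` on pairs below `κ` has at most two elements. -/
def TwoBounded (f : Ordinal → Ordinal → Ordinal) (κ : Ordinal) : Prop :=
  ∀ ξ : Ordinal, {p : Ordinal × Ordinal | p.1 < p.2 ∧ p.2 < κ ∧ f p.1 p.2 = ξ}.encard ≤ 2

/-- `f` is `<ω`-bounded: every fiber of `f` on pairs below `κ` is finite. -/
def FinBounded (f : Ordinal → Ordinal → Ordinal) (κ : Ordinal) : Prop :=
  ∀ ξ : Ordinal, {p : Ordinal × Ordinal | p.1 < p.2 ∧ p.2 < κ ∧ f p.1 p.2 = ξ}.Finite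

/-- `f` is `ω`-bounded: every fiber of `f` on pairs below `κ` is countable. -/
def OmegaBounded (f : Ordinal → Ordinal → Ordinal) (κ : Ordinal) : Prop :=
  ∀ ξ : Ordinal, {p : Ordinal × Ordinal | p.1 < p.2 ∧ p.2 < κ ∧ f p.1 p.2 = ξ}.Countable

/-- `A` is a closed set of ordinals: any nonzero `α` below `sup A` which is the
supremum of the elements of `A` below it belongs to `A`. -/
def IsClosedSet (A : Set Ordinal) : Prop :=
  ∀ α : Ordinal, α < sSup A → α ≠ 0 → sSup (A ∩ Set.Iio α) = α → α ∈ A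

/-- `C` is club in `δ`: a subset of `δ`, unbounded in `δ`, and closed below `δ`. -/
def IsClubIn (C : Set Ordinal) (δ : Ordinal) : Prop :=
  C ⊆ Set.Iio δ ∧ (∀ α < δ, ∃ β ∈ C, α ≤ β) ∧
  ∀ α : Ordinal, α < δ → α ≠ 0 → sSup (C ∩ Set.Iio α) = α → α ∈ C

/-- `A` is stationary in `δ`: it meets every club in `δ`. -/
def IsStationaryIn (A : Set Ordinal) (δ : Ordinal) : Prop :=
  ∀ C : Set Ordinal, IsClubIn C δ → (A ∩ C).Nonempty

/-- `f` is `<bd`-type bounded on pairs below `κ`: some `γ < bd` bounds the order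
type of every color class `t_{ηβ} = {ξ < β | f ξ β = f η β}`. -/
def TypeBounded (f : Ordinal → Ordinal → Ordinal) (κ bd : Ordinal) : Prop :=
  ∃ γ < bd, ∀ η β : Ordinal, η < β → β < κ →
    OTypeLE {ξ : Ordinal | ξ < β ∧ f ξ β = f η β} γ

/-- `f` is `<bd`-type bounded relative to the set `A`. -/
def TypeBoundedOn (f : Ordinal → Ordinal → Ordinal) (A : Set Ordinal) (bd : Ordinal) : Prop :=
  ∃ γ < bd, ∀ η ∈ A, ∀ β ∈ A, η < β →
    OTypeLE {ξ : Ordinal | ξ ∈ A ∧ ξ < β ∧ f ξ β = f η β} γ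

/-- The principle `(*)`: there is a sequence `⟨S_α : α ∈ S^{ω₂}_ω⟩` of countable
`S_α ⊆ α` such that for every `β ∈ S^{ω₂}_{ω₁}` there is a club `c ⊆ β` of ordinals of
countable cofinality with `c ∩ α ⊆ S_α` for every `α ∈ c`. -/
def StarPrinciple : Prop :=
  ∃ S : Ordinal.{0} → Set Ordinal.{0},
    (∀ α : Ordinal, α < (Cardinal.aleph 2).ord → α.cof = ℵ₀ →
      S α ⊆ Set.Iio α ∧ (S α).Countable) ∧
    ∀ β : Ordinal, β < (Cardinal.aleph 2).ord → β.cof = Cardinal.aleph 1 →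
      ∃ c : Set Ordinal, IsClubIn c β ∧ (∀ α ∈ c, α.cof = ℵ₀) ∧
        ∀ α ∈ c, c ∩ Set.Iio α ⊆ S α

universe v

theorem aux_sup {C : Set Ordinal.{u}} {α : Ordinal.{u}} (h0 : α ≠ 0) :
    sSup (C ∩ Set.Iio α) = α ↔ ∀ x < α, ∃ y ∈ C, x < y ∧ y < α := by
  have hb : BddAbove (C ∩ Set.Iio α) := ⟨α, fun y hy => le_of_lt hy.2⟩
  constructor
  · intro h x hx
    have hne : (C ∩ Set.Iio α).Nonempty := by
      by_contra hne
      rw [Set.not_nonempty_iff_eq_empty] at hne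
      rw [hne] at h
      simp at h
      exact h0 h.symm
    obtain ⟨y, hy, hxy⟩ := exists_lt_of_lt_csSup hne (by rw [h]; exact hx)
    exact ⟨y, hy.1, hxy, hy.2⟩
  · intro h
    apply le_antisymm
    · exact csSup_le' (fun y hy => le_of_lt hy.2)
    · by_contra hlt
      push Not at hlt
      obtain ⟨y, hy, h1, h2⟩ := h _ hlt
      exact absurd (le_csSup hb ⟨hy, h2⟩) (not_le.2 h1)

theorem aux_inter {ι : Type u} {β : Ordinal.{u}} (hc : ℵ₀ < β.cof) (hι : #ι < β.cof)
    (C : ι → Set Ordinal.{u}) (hC : ∀ i, IsClubIn (C i) β) (x : Ordinal.{u}) (hx : x < β) :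
    ∃ y, x < y ∧ y < β ∧ y.cof = ℵ₀ ∧ ∀ i, y ∈ C i := by
  have hlim : Order.IsSuccLimit β := aleph0_le_cof.1 hc.le
  have step : ∀ w : Set.Iio β, ∃ y : Set.Iio β, w < y ∧ ∀ i, ∃ z ∈ C i, w.1 < z ∧ z < y.1 := by
    rintro ⟨w, hw⟩
    have hw1 : w + 1 < β := by simpa using hlim.succ_lt hw
    choose z hz hz' using fun i => (hC i).2.1 (w + 1) hw1
    have hsup : (⨆ i, z i + 1) < β := by
      apply iSup_add_one_lt_of_lt_cof hι
      intro i
      exact (hC i).1 (hz i)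
    refine ⟨⟨max (w + 1) (⨆ i, z i + 1), max_lt hw1 hsup⟩, ?_, fun i => ⟨z i, hz i, ?_, ?_⟩⟩
    · rw [← Subtype.coe_lt_coe]
      exact lt_of_lt_of_le (lt_add_one w) (le_max_left _ _)
    · exact lt_of_lt_of_le (lt_add_one w) (hz' i)
    · exact lt_of_lt_of_le (lt_add_one _)
        (le_trans (Ordinal.le_iSup (fun i => z i + 1) i) (le_max_right _ _))
  choose g hg hg' using step
  let s : ℕ → Ordinal.{u} := fun n => (g^[n] ⟨x, hx⟩).1
  have hsucc : ∀ n, s (n + 1) = (g (g^[n] ⟨x, hx⟩)).1 := by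
    intro n
    simp only [s, Function.iterate_succ_apply']
  have hs : StrictMono s := by
    apply strictMono_nat_of_lt_succ
    intro n
    rw [hsucc]
    exact hg _
  have hlt : (⨆ n, s n) < β := by
    apply lift_iSup_lt_of_lt_cof
    · simpa using hc
    · intro n
      exact (g^[n] ⟨x, hx⟩).2
  have hle : ∀ n, s n < ⨆ n, s n := fun n =>
    lt_of_lt_of_le (hs (Nat.lt_succ_self n)) (Ordinal.le_iSup s (n + 1))
  have hx0 : x < ⨆ n, s n := hle 0
  refine ⟨⨆ n, s n, hx0, hlt, ?_, ?_⟩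
  · have := lift_cof_iSup hs
    simpa using this
  · intro i
    have h0 : (⨆ n, s n) ≠ 0 := (lt_of_le_of_lt (zero_le) hx0).ne'
    apply (hC i).2.2 _ hlt h0
    rw [aux_sup h0]
    intro w hw
    obtain ⟨n, hn⟩ := (Ordinal.lt_iSup_iff).1 hw
    obtain ⟨z, hz, h1, h2⟩ := hg' (g^[n] ⟨x, hx⟩) i
    refine ⟨z, hz, lt_trans hn h1, lt_trans ?_ (hle (n + 1))⟩
    rw [hsucc]
    exact h2

theorem aux_otype {A : Set Ordinal.{u}} (hA : A.Countable) :
    ∃ γ < (Cardinal.aleph 1).ord, OTypeLE A γ := by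
  have h1 : typeLT A < Ordinal.lift.{u + 1} (Cardinal.aleph.{u} 1).ord := by
    rw [Cardinal.lift_ord, Cardinal.lt_ord, card_type]
    have : #A ≤ ℵ₀ := Cardinal.le_aleph0_iff_set_countable.2 hA
    refine lt_of_le_of_lt this ?_
    simpa using aleph0_lt_aleph_one
  obtain ⟨γ, hγ', hγ⟩ := Ordinal.lt_lift_iff.1 h1
  refine ⟨γ, hγ', ?_⟩
  rw [← type_lt_Iio] at hγ
  obtain ⟨e⟩ := type_eq.1 hγ.symm
  exact ⟨(OrderIso.ofRelIsoLT e).toOrderEmbedding⟩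

theorem OTypeLE.mono_right {A : Set Ordinal.{u}} {γ δ : Ordinal.{u}} (h : OTypeLE A γ)
    (hle : γ ≤ δ) : OTypeLE A δ := by
  obtain ⟨e⟩ := h
  exact ⟨e.trans (Subtype.orderEmbedding (fun x hx => lt_of_lt_of_le hx hle))⟩

theorem OTypeLE.mono_left {A B : Set Ordinal.{u}} {γ : Ordinal.{u}} (h : OTypeLE B γ)
    (hle : A ⊆ B) : OTypeLE A γ := by
  obtain ⟨e⟩ := h
  exact ⟨(Subtype.orderEmbedding hle).trans e⟩

theorem OTypeLE.of_subsingleton {A : Set Ordinal.{u}} {γ : Ordinal.{u}} (h : A.Subsingleton)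
    (hle : 0 < γ) : OTypeLE A γ := by
  have := h.coe_sort
  exact ⟨OrderEmbedding.ofMapLEIff (fun _ => ⟨0, hle⟩)
    (fun a b => by simp [Subsingleton.elim a b])⟩

noncomputable def unlift (α : Ordinal.{u}) : Ordinal.{0} :=
  Function.invFun Ordinal.lift.{u, 0} α

theorem unlift_lift (a : Ordinal.{0}) : unlift (Ordinal.lift.{u, 0} a) = a :=
  Function.leftInverse_invFun (fun _ _ h => Ordinal.lift_inj.1 h) a

theorem lift_omega2 : Ordinal.lift.{u, 0} (Cardinal.aleph 2).ord = (Cardinal.aleph 2).ord := by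
  simp [Cardinal.lift_ord]

theorem exists_lift {α : Ordinal.{u}} (h : α < (Cardinal.aleph 2).ord) :
    ∃ a : Ordinal.{0}, a < (Cardinal.aleph 2).ord ∧ Ordinal.lift.{u, 0} a = α := by
  rw [← lift_omega2.{u}] at h
  obtain ⟨a, ha', ha⟩ := Ordinal.lt_lift_iff.1 h
  exact ⟨a, ha', ha⟩

theorem star_lift (h : StarPrinciple) : ∃ S : Ordinal.{u} → Set Ordinal.{u},
    (∀ α : Ordinal, α < (Cardinal.aleph 2).ord → α.cof = ℵ₀ →
      S α ⊆ Set.Iio α ∧ (S α).Countable) ∧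
    ∀ β : Ordinal, β < (Cardinal.aleph 2).ord → β.cof = Cardinal.aleph 1 →
      ∃ c : Set Ordinal, IsClubIn c β ∧ (∀ α ∈ c, α.cof = ℵ₀) ∧
        ∀ α ∈ c, c ∩ Set.Iio α ⊆ S α := by
  obtain ⟨S, hS, hc⟩ := h
  refine ⟨fun α => Ordinal.lift.{u, 0} '' S (unlift α), ?_, ?_⟩
  · intro α hα hcof
    obtain ⟨a, ha, rfl⟩ := exists_lift hα
    rw [← Ordinal.lift_cof] at hcof
    have hcof' : a.cof = ℵ₀ := by
      apply Cardinal.lift_injective.{u}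
      rw [hcof, Cardinal.lift_aleph0]
    obtain ⟨h1, h2⟩ := hS a ha hcof'
    simp only [unlift_lift]
    refine ⟨?_, h2.image _⟩
    rintro _ ⟨y, hy, rfl⟩
    exact Ordinal.lift_lt.2 (h1 hy)
  · intro β hβ hcof
    obtain ⟨b, hb, rfl⟩ := exists_lift hβ
    rw [← Ordinal.lift_cof] at hcof
    have hcof' : b.cof = Cardinal.aleph 1 := by
      apply Cardinal.lift_injective.{u}
      simpa using hcof
    obtain ⟨c, ⟨hc1, hc2, hc3⟩, hcc, hcS⟩ := hc b hb hcof'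
    refine ⟨Ordinal.lift.{u, 0} '' c, ⟨?_, ?_, ?_⟩, ?_, ?_⟩
    · rintro _ ⟨y, hy, rfl⟩
      exact Ordinal.lift_lt.2 (hc1 hy)
    · intro α hα
      obtain ⟨a, ha, rfl⟩ := Ordinal.lt_lift_iff.1 hα
      obtain ⟨y, hy, hay⟩ := hc2 a ha
      exact ⟨_, ⟨y, hy, rfl⟩, Ordinal.lift_le.2 hay⟩
    · intro α hα h0 hsup
      obtain ⟨a, ha, rfl⟩ := Ordinal.lt_lift_iff.1 hα
      have h0' : a ≠ 0 := by
        rintro rfl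
        simp at h0
      refine ⟨a, hc3 a ha h0' ?_, rfl⟩
      rw [aux_sup h0'] 
      rw [aux_sup h0] at hsup
      intro x hx
      obtain ⟨_, ⟨y, hy, rfl⟩, h1, h2⟩ := hsup _ (Ordinal.lift_lt.2 hx)
      exact ⟨y, hy, Ordinal.lift_lt.1 h1, Ordinal.lift_lt.1 h2⟩
    · rintro _ ⟨y, hy, rfl⟩
      rw [← Ordinal.lift_cof, hcc y hy]
      simp
    · rintro _ ⟨y, hy, rfl⟩ _ ⟨⟨z, hz, rfl⟩, hzy⟩
      simp only [unlift_lift]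
      exact ⟨z, hcS y hy ⟨hz, Ordinal.lift_lt.1 hzy⟩, rfl⟩

theorem aleph2_succ : Cardinal.aleph.{u} 2 = Order.succ (Cardinal.aleph 1) := by
  rw [← Cardinal.aleph_succ]
  congr 1
  rw [← Ordinal.add_one_eq_succ, one_add_one_eq_two]

theorem cof_omega2 : (Cardinal.aleph.{u} 2).ord.cof = Cardinal.aleph 2 := by
  rw [aleph2_succ]
  exact (Cardinal.isRegular_succ (aleph0_le_aleph 1)).cof_eq

theorem cof_omega1 : (Cardinal.aleph.{u} 1).ord.cof = Cardinal.aleph 1 :=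
  isRegular_aleph_one.cof_eq

theorem aleph1_lt_aleph2 : Cardinal.aleph.{u} 1 < Cardinal.aleph 2 := by
  rw [aleph2_succ]
  exact Order.lt_succ _

theorem aux_club {C : Set Ordinal.{u}} (hb : ∀ x ∈ C, x < (Cardinal.aleph 2).ord)
    (hcl : IsClosedSet C) (hC : HasOType C (Cardinal.aleph 1).ord) :
    ∃ β < (Cardinal.aleph 2).ord, β.cof = Cardinal.aleph 1 ∧ IsClubIn C β := by
  obtain ⟨e⟩ := hC
  have hlim : Order.IsSuccLimit (Cardinal.aleph.{u} 1).ord :=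
    aleph0_le_cof.1 (by rw [cof_omega1]; exact aleph0_le_aleph 1)
  have hmono : StrictMono (fun i => (e i).1) := fun i j hij => e.strictMono hij
  have hrange : Set.range (fun i => (e i).1) = C := by
    ext x
    constructor
    · rintro ⟨i, rfl⟩
      exact (e i).2
    · intro hx
      exact ⟨e.symm ⟨x, hx⟩, by simp⟩
  have hsup : sSup C = ⨆ i, (e i).1 := by
    rw [iSup, hrange]
  have hbdd : BddAbove C := ⟨_, fun x hx => (hb x hx).le⟩
  have hlt : ∀ x ∈ C, ∃ y ∈ C, x < y := by
    rw [← hrange]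
    rintro _ ⟨⟨i, hi⟩, rfl⟩
    exact ⟨_, ⟨⟨Order.succ i, hlim.succ_lt hi⟩, rfl⟩, hmono (Order.lt_succ i)⟩
  have hne : C.Nonempty := by
    rw [← hrange]
    exact ⟨_, ⟨⟨0, hlim.bot_lt⟩, rfl⟩⟩
  refine ⟨sSup C, ?_, ?_, ?_, ?_, ?_⟩
  · apply sSup_lt_of_lt_cof
    · have h1 : #C = #(Set.Iio (Cardinal.aleph.{u} 1).ord) := Cardinal.mk_congr e.toEquiv.symm
      rw [h1, ← Ordinal.lift_cof, cof_omega2]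
      simpa using aleph1_lt_aleph2
    · exact hb
  · rw [hsup, cof_iSup_Iio hmono hlim.isSuccPrelimit, cof_omega1]
  · intro x hx
    obtain ⟨y, hy, hxy⟩ := hlt x hx
    exact lt_of_lt_of_le hxy (le_csSup hbdd hy)
  · intro α hα
    obtain ⟨y, hy, hxy⟩ := exists_lt_of_lt_csSup hne hα
    exact ⟨y, hy, hxy.le⟩
  · exact hcl

open scoped Classical in
noncomputable def starCol (S : Ordinal.{u} → Set Ordinal.{u}) (ξ α : Ordinal.{u}) :
    Ordinal.{v} :=
  if ξ ∈ S α then 0 else Ordinal.lift.{v, 0} (unlift ξ) + 1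

/-- Remark (star): `(*)` yields a stationary `S ⊆ S^{ω₂}_ω`, an ordinal `γ < ω₁` and a
coloring `f : [ω₂]² → ω₂` whose color classes `t_{ηα}` for `α ∈ S` all have order type
at most `γ`, yet no closed subset of `S` of order type `ω₁` is `f`-rainbow. -/
theorem stmt11 (hstar : StarPrinciple) :
    ∃ S : Set Ordinal, ∃ γ : Ordinal, ∃ f : Ordinal → Ordinal → Ordinal,
      S ⊆ {α : Ordinal | α < (Cardinal.aleph 2).ord ∧ α.cof = ℵ₀} ∧
      IsStationaryIn S (Cardinal.aleph 2).ord ∧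
      γ < (Cardinal.aleph 1).ord ∧
      (∀ α β : Ordinal, α < β → β < (Cardinal.aleph 2).ord → f α β < (Cardinal.aleph 2).ord) ∧
      (∀ α ∈ S, ∀ η : Ordinal, η < α →
        OTypeLE {ξ : Ordinal | ξ < α ∧ f ξ α = f η α} γ) ∧
      ∀ C : Set Ordinal, C ⊆ S → IsClosedSet C →
        HasOType C (Cardinal.aleph 1).ord → ¬ IsRainbow f C := by
  classical
  obtain ⟨S, hS, hclub⟩ := star_lift hstar
  have hlim2 : Order.IsSuccLimit (Cardinal.aleph 2).ord :=
    aleph0_le_cof.1 (by rw [cof_omega2]; exact aleph0_le_aleph 2)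
  have hstat : ∃ γ < (Cardinal.aleph 1).ord, IsStationaryIn
      {α : Ordinal | (α < (Cardinal.aleph 2).ord ∧ α.cof = ℵ₀) ∧ OTypeLE (S α) γ}
      (Cardinal.aleph 2).ord := by
    by_contra hno
    have hno' : ∀ γ : (Cardinal.aleph 1).ord.ToType, ∃ C, IsClubIn C (Cardinal.aleph 2).ord ∧
        ¬ ({α : Ordinal | (α < (Cardinal.aleph 2).ord ∧ α.cof = ℵ₀) ∧
          OTypeLE (S α) (Ordinal.ToType.mk.symm γ).1} ∩ C).Nonempty := by
      intro γ
      by_contra h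
      push Not at h
      refine hno ⟨(Ordinal.ToType.mk.symm γ).1, (Ordinal.ToType.mk.symm γ).2, fun C hC => ?_⟩
      exact h C hC
    choose C hC hC' using hno'
    obtain ⟨y, -, hy, hycof, hyC⟩ := aux_inter (β := (Cardinal.aleph 2).ord)
      (by rw [cof_omega2]; exact lt_trans aleph0_lt_aleph_one aleph1_lt_aleph2)
      (by rw [cof_omega2]; simpa using aleph1_lt_aleph2) C hC 0 hlim2.bot_lt
    obtain ⟨γ, hγ, hγ'⟩ := aux_otype (hS y hy hycof).2
    refine hC' (Ordinal.ToType.mk ⟨γ, hγ⟩) ⟨y, ⟨⟨hy, hycof⟩, ?_⟩, hyC _⟩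
    simpa using hγ'
  obtain ⟨γ, hγ, hst⟩ := hstat
  have hlim1 : Order.IsSuccLimit (Cardinal.aleph 1).ord :=
    aleph0_le_cof.1 (by rw [cof_omega1]; exact aleph0_le_aleph 1)
  refine ⟨_, γ + 1, starCol S,
    fun α hα => hα.1, hst, ?_, ?_, ?_, ?_⟩
  · simpa using hlim1.succ_lt hγ
  · intro α β hαβ hβ
    have hl : Order.IsSuccLimit (Cardinal.aleph 2).ord :=
      aleph0_le_cof.1 (by rw [cof_omega2]; exact aleph0_le_aleph 2)
    unfold starCol
    split_ifs
    · exact hl.bot_lt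
    · obtain ⟨a, ha, rfl⟩ := exists_lift (hαβ.trans hβ)
      rw [unlift_lift]
      have : Ordinal.lift a < (Cardinal.aleph 2).ord := by
        rw [← lift_omega2]
        exact Ordinal.lift_lt.2 ha
      simpa using hl.succ_lt this
  · rintro α ⟨⟨hα, hcof⟩, hα'⟩ η hη
    by_cases hηS : η ∈ S α
    · refine (hα'.mono_right (le_of_lt (lt_add_one γ))).mono_left ?_
      rintro ξ ⟨hξ, hf⟩
      by_contra hn
      simp [starCol, hηS, hn] at hf
    · apply OTypeLE.of_subsingleton
      · suffices key : ∀ ξ ∈ {ξ : Ordinal | ξ < α ∧ starCol S ξ α = starCol S η α}, ξ = η by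
          intro ξ hξ ξ' hξ'
          rw [key ξ hξ, key ξ' hξ']
        rintro ξ ⟨hξ, hf⟩
        by_cases hn : ξ ∈ S α
        · simp [starCol, hηS, hn] at hf
          exact absurd hf.symm (lt_of_le_of_lt zero_le (lt_add_one _)).ne'
        · simp only [starCol, hηS, hn, if_false] at hf
          obtain ⟨a, ha, rfl⟩ := exists_lift (hξ.trans hα)
          obtain ⟨b, hb, rfl⟩ := exists_lift (hη.trans hα)
          simp only [unlift_lift] at hf
          have : a = b := by simpa using hf
          rw [this]
      · exact lt_of_le_of_lt zero_le (lt_add_one γ)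
  · intro C hCS hcl hot hrain
    obtain ⟨β, hβ, hβcof, hCβ⟩ := aux_club (fun x hx => (hCS hx).1.1) hcl hot
    obtain ⟨c, hc, -, hcS⟩ := hclub β hβ hβcof
    have hβ0 : ℵ₀ < β.cof := by rw [hβcof]; exact aleph0_lt_aleph_one
    have hβl : Order.IsSuccLimit β := aleph0_le_cof.1 hβ0.le
    have hex : ∀ x < β, ∃ y, x < y ∧ y < β ∧ y ∈ C ∧ y ∈ c := by
      intro x hx
      obtain ⟨y, h1, h2, -, h3⟩ := aux_inter (ι := ULift Bool) hβ0
        (lt_of_le_of_lt (Cardinal.mk_le_aleph0) hβ0)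
        (fun i => if i.down then C else c)
        (by rintro ⟨_ | _⟩ <;> simpa) x hx
      exact ⟨y, h1, h2, by simpa using h3 ⟨true⟩, by simpa using h3 ⟨false⟩⟩
    obtain ⟨x, -, hx, hxC, hxc⟩ := hex 0 hβl.bot_lt
    obtain ⟨y, hxy, hy, hyC, hyc⟩ := hex x hx
    obtain ⟨z, hyz, hz, hzC, hzc⟩ := hex y hy
    have h1 : x ∈ S z := hcS z hzc ⟨hxc, hxy.trans hyz⟩
    have h2 : y ∈ S z := hcS z hzc ⟨hyc, hyz⟩
    exact hxy.ne (hrain x hxC z hzC y hyC z hzC (hxy.trans hyz) hyz (by simp [starCol, h1, h2])).1
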